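/- Let L be a finite lattice. Then A** = A holds for all antichains A in L if and only if L is isomorphic to a Boolean lattice 2^V for some finite set V. -/

import Mathlib

/-- The blocker of a set `A` in a poset with bottom element: the minimal elements among
those having a common atom with every member of `A`. -/
def blocker {P : Type*} [PartialOrder P] [OrderBot P] (A : Set P) : Set P :=
  {x | (∀ a ∈ A, ∃ l : P, IsAtom l ∧ l ≤ x ∧ l ≤ a) ∧
    ∀ y : P, (∀ a ∈ A, ∃ l : P, IsAtom l ∧ l ≤ y ∧ l ≤ a) → y ≤ x → y = x}

/-- An antichain in a poset with bottom element, in the sense of Björner–Hultman: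
a nonempty set avoiding `⊥` whose elements are pairwise incomparable. -/
def IsAnti {P : Type*} [PartialOrder P] [OrderBot P] (A : Set P) : Prop :=
  A.Nonempty ∧ ⊥ ∉ A ∧ IsAntichain (· ≤ ·) A

/-- `Λ(x)`, the set of atoms below `x`. -/
def atomsBelow {P : Type*} [PartialOrder P] [OrderBot P] (x : P) : Set P :=
  {l | IsAtom l ∧ l ≤ x}

/-!
A set `A` of atoms has as transversals its upper bounds, and the blocker of `{x}` is the set of
atoms below `x`. Applying `A** = A` to singletons and to sets of atoms therefore shows that every
element is the join of the atoms below it and that every set of atoms is the set of all atoms below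
its join, so that the poset is a full powerset `2^V`.

In `2^V` with `V` finite, a set meeting every member of `A*` contains a member of `A`: otherwise its
complement is a transversal of `A`, and a minimal transversal inside the complement is a member of
`A*` that the set misses. Hence `A**` is the set of minimal elements of the upper closure of `A`.

If `V` contains distinct points `a 0, b 0, a 1, b 1, …`, the duality fails for the antichain of the
sets `{b i | i < n} ∪ {a i | n ≤ i}`: its double blocker also contains their limit `{b i | i ∈ ℕ}`.
-/

open Set

/-- `x` is a transversal of `A` if it shares an atom with every member of `A`; the blocker of `A`
is the set of minimal transversals. -/
def IsTransversal {P : Type*} [PartialOrder P] [OrderBot P] (A : Set P) (x : P) : Prop :=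
  ∀ a ∈ A, ∃ l : P, IsAtom l ∧ l ≤ x ∧ l ≤ a

/-- Strong blocker duality for a poset with bottom: `A** = A` for all antichains `A`. -/
def StrongBlockerDuality (P : Type*) [PartialOrder P] [OrderBot P] : Prop :=
  ∀ A : Set P, IsAnti A → blocker (blocker A) = A

section PartialOrder

variable {P Q : Type*} [PartialOrder P] [OrderBot P] [PartialOrder Q] [OrderBot Q]
  {A : Set P} {x y : P}

theorem mem_blocker_iff_minimal : x ∈ blocker A ↔ Minimal (IsTransversal A) x := by
  simp only [minimal_iff, eq_comm (a := x)]
  rfl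

theorem IsTransversal.mono (hx : IsTransversal A x) (hxy : x ≤ y) : IsTransversal A y :=
  fun a ha =>
    let ⟨l, hl, hlx, hla⟩ := hx a ha
    ⟨l, hl, hlx.trans hxy, hla⟩

theorem isTransversal_blocker_of_mem (hx : x ∈ A) : IsTransversal (blocker A) x :=
  fun _ hb =>
    let ⟨l, hl, hlb, hlx⟩ := hb.1 x hx
    ⟨l, hl, hlx, hlb⟩

theorem isTransversal_iff_mem_upperBounds (hA : ∀ a ∈ A, IsAtom a) :
    IsTransversal A x ↔ x ∈ upperBounds A := by
  refine ⟨fun hx a ha => ?_, fun hx a ha => ⟨a, hA a ha, hx ha, le_rfl⟩⟩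
  obtain ⟨l, hl, hlx, hla⟩ := hx a ha
  rwa [← ((hA a ha).le_iff_eq hl.ne_bot).1 hla]

theorem blocker_empty : blocker (∅ : Set P) = {⊥} := by
  ext x
  exact mem_blocker_iff_minimal.trans (minimal_iff_eq (fun _ h => h.elim) fun _ _ => bot_le)

theorem blocker_singleton (x : P) : blocker {x} = atomsBelow x := by
  ext y
  rw [mem_blocker_iff_minimal]
  constructor
  · intro hy
    obtain ⟨l, hl, hly, hlx⟩ := hy.prop x rfl
    have hl_trans : IsTransversal {x} l := by
      rintro _ rfl
      exact ⟨l, hl, le_rfl, hlx⟩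
    rw [← hy.eq_of_le hl_trans hly]
    exact ⟨hl, hlx⟩
  · rintro ⟨hy, hyx⟩
    refine ⟨by rintro _ rfl; exact ⟨y, hy, le_rfl, hyx⟩, fun z hz hzy => ?_⟩
    obtain ⟨l, hl, hlz, -⟩ := hz x rfl
    rwa [← (hy.le_iff_eq hl.ne_bot).1 (hlz.trans hzy)]

theorem isAnti_singleton (hx : x ≠ ⊥) : IsAnti {x} :=
  ⟨singleton_nonempty x, hx.symm, subsingleton_singleton.isAntichain _⟩

theorem isAnti_of_forall_isAtom (hne : A.Nonempty) (hA : ∀ a ∈ A, IsAtom a) : IsAnti A :=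
  ⟨hne, fun h => (hA ⊥ h).ne_bot rfl,
    fun a ha b hb hab hle => hab (((hA b hb).le_iff_eq (hA a ha).ne_bot).1 hle)⟩

theorem isTransversal_preimage_iff (e : P ≃o Q) (B : Set Q) :
    IsTransversal (e ⁻¹' B) x ↔ IsTransversal B (e x) := by
  simp only [IsTransversal, mem_preimage, e.surjective.forall, e.surjective.exists, e.isAtom_iff,
    e.le_iff_le]

theorem blocker_preimage (e : P ≃o Q) (B : Set Q) : blocker (e ⁻¹' B) = e ⁻¹' blocker B := by
  ext x
  simp only [mem_preimage, mem_blocker_iff_minimal, Minimal, e.surjective.forall, e.le_iff_le,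
    isTransversal_preimage_iff]

theorem IsAnti.preimage {B : Set Q} (hB : IsAnti B) (e : P ≃o Q) : IsAnti (e ⁻¹' B) :=
  ⟨hB.1.preimage e.surjective, by simpa using hB.2.1, hB.2.2.preimage_iso e⟩

theorem StrongBlockerDuality.of_orderIso (hP : StrongBlockerDuality P) (e : P ≃o Q) :
    StrongBlockerDuality Q := by
  intro B hB
  apply e.surjective.preimage_injective
  rw [← blocker_preimage, ← blocker_preimage, hP _ (hB.preimage e)]

end PartialOrder

section SemilatticeInf

variable {L : Type*} [SemilatticeInf L] [OrderBot L] {A : Set L} {x : L}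

theorem mem_blocker_iff_isLUB (hA : ∀ a ∈ A, IsAtom a) : x ∈ blocker A ↔ IsLUB A x := by
  have hdir : DirectedOn (fun x y => y ≤ x) (upperBounds A) := fun y hy z hz =>
    ⟨y ⊓ z, fun a ha => le_inf (hy ha) (hz ha), inf_le_left, inf_le_right⟩
  rw [mem_blocker_iff_minimal, IsLUB, ← hdir.minimal_iff_isLeast]
  simp only [Minimal, isTransversal_iff_mem_upperBounds hA]

namespace StrongBlockerDuality

theorem isLUB_atomsBelow (hL : StrongBlockerDuality L) (x : L) : IsLUB (atomsBelow x) x := by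
  obtain rfl | hx := eq_or_ne x ⊥
  · exact ⟨fun _ hl => hl.2, fun _ _ => bot_le⟩
  · have hdual := hL {x} (isAnti_singleton hx)
    rw [blocker_singleton] at hdual
    exact (mem_blocker_iff_isLUB fun _ hl => hl.1).1 (hdual.ge rfl)

theorem atomsBelow_subset_atomsBelow_iff (hL : StrongBlockerDuality L) {x y : L} :
    atomsBelow x ⊆ atomsBelow y ↔ x ≤ y :=
  ⟨fun h => (hL.isLUB_atomsBelow x).mono (hL.isLUB_atomsBelow y) h,
    fun h _ hl => ⟨hl.1, hl.2.trans h⟩⟩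

theorem exists_atomsBelow_eq (hL : StrongBlockerDuality L) (hA : ∀ a ∈ A, IsAtom a) :
    ∃ x, atomsBelow x = A := by
  obtain rfl | hne := A.eq_empty_or_nonempty
  · exact ⟨⊥, eq_empty_of_forall_notMem fun l hl => hl.1.ne_bot (le_bot_iff.1 hl.2)⟩
  have hanti := isAnti_of_forall_isAtom hne hA
  have hdual := hL A hanti
  obtain ⟨x, hx⟩ : (blocker A).Nonempty := by
    rw [nonempty_iff_ne_empty]
    intro hempty
    rw [hempty, blocker_empty] at hdual
    exact hanti.2.1 (hdual.le rfl)
  have hblocker : blocker A = {x} := by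
    ext y
    rw [mem_blocker_iff_isLUB hA] at hx ⊢
    exact ⟨fun hy => hy.unique hx, fun hy => hy ▸ hx⟩
  exact ⟨x, by rw [← blocker_singleton, ← hblocker, hdual]⟩

theorem nonempty_orderIso_set_atoms (hL : StrongBlockerDuality L) :
    Nonempty (L ≃o Set {l : L // IsAtom l}) := by
  let f (x : L) : Set {l : L // IsAtom l} := Subtype.val ⁻¹' atomsBelow x
  have image_f (x : L) : Subtype.val '' f x = atomsBelow x :=
    Subtype.image_preimage_val _ _ |>.trans (inter_eq_right.2 fun _ hl => hl.1)
  have f_le_f_iff (x y : L) : f x ≤ f y ↔ x ≤ y := by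
    rw [← hL.atomsBelow_subset_atomsBelow_iff, ← image_f x, ← image_f y,
      image_subset_image_iff Subtype.val_injective]
  have f_surjective : Function.Surjective f := by
    intro S
    obtain ⟨x, hx⟩ := hL.exists_atomsBelow_eq (A := Subtype.val '' S) (by
      rintro _ ⟨l, -, rfl⟩
      exact l.2)
    exact ⟨x, by simp only [f, hx, preimage_image_eq _ Subtype.val_injective]⟩
  exact ⟨RelIso.ofSurjective (OrderEmbedding.ofMapLEIff f f_le_f_iff) f_surjective⟩

end StrongBlockerDuality

end SemilatticeInf

section Powerset

variable {V : Type*} {A : Set (Set V)} {s : Set V}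

theorem isTransversal_set_iff : IsTransversal A s ↔ ∀ x ∈ A, (s ∩ x).Nonempty := by
  refine forall₂_congr fun x _ => ?_
  simp only [Set.isAtom_iff]
  constructor
  · rintro ⟨_, ⟨v, rfl⟩, hvs, hvx⟩
    exact ⟨v, hvs rfl, hvx rfl⟩
  · rintro ⟨v, hvs, hvx⟩
    exact ⟨{v}, ⟨v, rfl⟩, singleton_subset_iff.2 hvs, singleton_subset_iff.2 hvx⟩

theorem isTransversal_blocker_iff_mem_upperClosure [Finite V] :
    IsTransversal (blocker A) s ↔ s ∈ upperClosure A := by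
  constructor
  · intro hs
    by_contra! hnot
    have hcompl : IsTransversal A sᶜ := isTransversal_set_iff.2 fun x hx => by
      rw [inter_comm, inter_compl_nonempty_iff]
      exact fun hxs => hnot ⟨x, hx, hxs⟩
    obtain ⟨b, hbs, hb⟩ := (toFinite {t | IsTransversal A t}).exists_le_minimal hcompl
    obtain ⟨v, hvs, hvb⟩ := isTransversal_set_iff.1 hs b (mem_blocker_iff_minimal.2 hb)
    exact hbs hvb hvs
  · rintro ⟨x, hx, hxs⟩
    exact (isTransversal_blocker_of_mem hx).mono hxs

theorem blocker_blocker_of_isAntichain [Finite V] (hA : IsAntichain (· ≤ ·) A) :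
    blocker (blocker A) = A := by
  ext s
  rw [mem_blocker_iff_minimal, ← hA.minimal_mem_upperClosure_iff_mem]
  simp only [Minimal, isTransversal_blocker_iff_mem_upperClosure]

theorem strongBlockerDuality_set [Finite V] : StrongBlockerDuality (Set V) :=
  fun _ hA => blocker_blocker_of_isAntichain hA.2.2

end Powerset

/-- The staircase of two sequences of points `a` and `b`: the `n`-th set takes its first `n` points
from `b` and the remaining ones from `a`. It witnesses the failure of strong blocker duality in
infinite powersets. -/
def staircase {V : Type*} (a b : ℕ → V) (n : ℕ) : Set V :=
  b '' Iio n ∪ a '' Ici n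

section Staircase

variable {V : Type*} {a b : ℕ → V}

theorem apply_left_mem_staircase_iff (ha : a.Injective) (hab : ∀ i j, a i ≠ b j) {i n : ℕ} :
    a i ∈ staircase a b n ↔ n ≤ i := by
  simp [staircase, ha.eq_iff, (hab _ _).symm]

theorem apply_right_mem_staircase_iff (hb : b.Injective) (hab : ∀ i j, a i ≠ b j) {i n : ℕ} :
    b i ∈ staircase a b n ↔ i < n := by
  simp [staircase, hb.eq_iff, hab]

theorem isAnti_range_staircase (ha : a.Injective) (hb : b.Injective) (hab : ∀ i j, a i ≠ b j) :
    IsAnti (range (staircase a b)) := by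
  refine ⟨range_nonempty _, ?_, ?_⟩
  · rintro ⟨n, hn⟩
    exact hn.le ((apply_left_mem_staircase_iff ha hab).2 le_rfl)
  · rintro _ ⟨m, rfl⟩ _ ⟨n, rfl⟩ hne hle
    have hnm : n ≤ m := (apply_left_mem_staircase_iff ha hab).1
      (hle ((apply_left_mem_staircase_iff ha hab).2 le_rfl))
    have hmn : ¬n < m := fun h => lt_irrefl n <| (apply_right_mem_staircase_iff hb hab).1
      (hle ((apply_right_mem_staircase_iff hb hab).2 h))
    exact hne (congrArg _ (by omega))

theorem pair_mem_blocker_range_staircase (ha : a.Injective) (hb : b.Injective)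
    (hab : ∀ i j, a i ≠ b j) (m : ℕ) : {a m, b m} ∈ blocker (range (staircase a b)) := by
  simp only [mem_blocker_iff_minimal, Minimal, isTransversal_set_iff, forall_mem_range]
  refine ⟨fun n => ?_, fun s hs hle => ?_⟩
  · obtain hnm | hmn := le_or_gt n m
    · exact ⟨a m, by simp, (apply_left_mem_staircase_iff ha hab).2 hnm⟩
    · exact ⟨b m, by simp, (apply_right_mem_staircase_iff hb hab).2 hmn⟩
  · have ham : a m ∈ s := by
      obtain ⟨v, hvs, hv⟩ := hs 0
      obtain rfl | rfl := hle hvs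
      · exact hvs
      · exact absurd ((apply_right_mem_staircase_iff hb hab).1 hv) (Nat.not_lt_zero m)
    have hbm : b m ∈ s := by
      obtain ⟨v, hvs, hv⟩ := hs (m + 1)
      obtain rfl | rfl := hle hvs
      · exact absurd ((apply_left_mem_staircase_iff ha hab).1 hv) (Nat.not_succ_le_self m)
      · exact hvs
    exact insert_subset ham (singleton_subset_iff.2 hbm)

theorem range_inter_nonempty_of_mem_blocker_range_staircase (ha : a.Injective) {s : Set V}
    (hs : s ∈ blocker (range (staircase a b))) : (range b ∩ s).Nonempty := by
  simp only [mem_blocker_iff_minimal, Minimal, isTransversal_set_iff, forall_mem_range] at hs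
  obtain ⟨hs, hmin⟩ := hs
  by_contra hbs
  -- A transversal avoiding `b` contains infinitely many `a i`, so one of them can be removed.
  have exists_mem (n : ℕ) : ∃ i, n ≤ i ∧ a i ∈ s := by
    obtain ⟨_, hvs, ⟨i, -, rfl⟩ | ⟨i, hi, rfl⟩⟩ := hs n
    · exact absurd ⟨b i, mem_range_self i, hvs⟩ hbs
    · exact ⟨i, hi, hvs⟩
  obtain ⟨i, -, hi⟩ := exists_mem 0
  have htrans (n : ℕ) : (s \ {a i} ∩ staircase a b n).Nonempty := by
    obtain ⟨j, hj, hjs⟩ := exists_mem (max n (i + 1))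
    have hne : a j ≠ a i := ha.ne (by omega)
    exact ⟨a j, ⟨hjs, hne⟩, .inr ⟨j, (le_max_left _ _).trans hj, rfl⟩⟩
  exact (hmin htrans sdiff_subset hi).2 rfl

theorem range_mem_blocker_blocker_range_staircase (ha : a.Injective) (hb : b.Injective)
    (hab : ∀ i j, a i ≠ b j) : range b ∈ blocker (blocker (range (staircase a b))) := by
  simp only [mem_blocker_iff_minimal (A := blocker _), Minimal, isTransversal_set_iff]
  refine ⟨fun s hs => range_inter_nonempty_of_mem_blocker_range_staircase ha hs, ?_⟩
  rintro t ht hle _ ⟨m, rfl⟩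
  obtain ⟨_, hvt, rfl | rfl⟩ := ht _ (pair_mem_blocker_range_staircase ha hb hab m)
  · obtain ⟨j, hj⟩ := hle hvt
    exact absurd hj.symm (hab m j)
  · exact hvt

end Staircase

theorem finite_of_strongBlockerDuality_set {V : Type*} (hV : StrongBlockerDuality (Set V)) :
    Finite V := by
  by_contra hinf
  rw [not_finite_iff_infinite] at hinf
  let f : ℕ ⊕ ℕ ↪ V := Equiv.natSumNatEquivNat.toEmbedding.trans (Infinite.natEmbedding V)
  let a : ℕ → V := f ∘ Sum.inl
  let b : ℕ → V := f ∘ Sum.inr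
  have ha : a.Injective := f.injective.comp Sum.inl_injective
  have hb : b.Injective := f.injective.comp Sum.inr_injective
  have hab (i j : ℕ) : a i ≠ b j := f.injective.ne Sum.inl_ne_inr
  have hrange := range_mem_blocker_blocker_range_staircase ha hb hab
  rw [hV _ (isAnti_range_staircase ha hb hab)] at hrange
  obtain ⟨n, hn⟩ := hrange
  obtain ⟨j, hj⟩ := hn.le ((apply_left_mem_staircase_iff ha hab).2 le_rfl)
  exact hab n j hj.symm

theorem lattice_strong_blocker_duality_iff_boolean_general {L : Type*}
    [SemilatticeInf L] [OrderBot L] :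
    (∀ A : Set L, IsAnti A → blocker (blocker A) = A) ↔
      ∃ m : ℕ, Nonempty (L ≃o Set (Fin m)) := by
  constructor
  · intro (hL : StrongBlockerDuality L)
    obtain ⟨e⟩ := hL.nonempty_orderIso_set_atoms
    have : Finite {l : L // IsAtom l} := finite_of_strongBlockerDuality_set (hL.of_orderIso e)
    obtain ⟨m, ⟨g⟩⟩ := Finite.exists_equiv_fin {l : L // IsAtom l}
    exact ⟨m, ⟨e.trans g.toOrderIsoSet⟩⟩
  · rintro ⟨m, ⟨e⟩⟩
    exact strongBlockerDuality_set.of_orderIso e.symm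

/-- Corollary 2.6: a finite lattice satisfies `A** = A` for all antichains `A` if and
only if it is Boolean, i.e. isomorphic to the lattice of all subsets of a finite set. -/
theorem lattice_strong_blocker_duality_iff_boolean {L : Type*}
    [Lattice L] [BoundedOrder L] [Fintype L] :
    (∀ A : Set L, IsAnti A → blocker (blocker A) = A) ↔
      ∃ m : ℕ, Nonempty (L ≃o Set (Fin m)) :=
  lattice_strong_blocker_duality_iff_boolean_general
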